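/- Let A = (Q, Σ, δ, ρ) be a connected invertible-reversible Mealy automaton with exactly 3 states. If the group ⟨A⟩ generated by A is infinite, then ⟨A⟩ contains an element of infinite order; moreover there is a nonempty word u over Q such that the permutation ρ_u of Σ* has infinite order. -/

import Mathlib

/-!
Words over `Q` are permuted by the dual automaton, with
`δ_s(u v) = δ_s(u) δ_{ρ_u(s)}(v)`. After a word `u`, the elements stabilizing `u` act on the
children `u z` of `u` (the local action at `u`); a letter `z` fixed by this action is called
*rigid* after `u` (`Rigid`, label `1`). Everything below is about which letters are rigid, and about
the sets `Sec u` of words `ρ_u(s)`, where `s` stabilizes `u`.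

Two criteria connect this with the theorem.

* `infinite_order`: if for all large `k` the last letter of `u^k` is not rigid after the letters
  before it, then `ρ_u` has infinite order. Indeed if `ρ_V = id` then every word in the orbit of
  `V V` is a square, so that its last letter is determined by the preceding ones.
* `finite_of_closed`: if a nonempty set of words `P` is such that the elements of `Sec P` move no
  letter, and remain in `Sec P'` for some `P'` of the set after reading any letter, then the
  elements of `Sec P` act trivially, so `δ_{ρ_P(s)}` depends only on `δ_s(P)`. As `ρ_P` is
  surjective, the `δ_s` are finitely many, and hence so are the `ρ_u`.

If all levels `Q^n` are single orbits, the first criterion applies to any letter. Otherwise let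
`c ≥ 1` be such that `Q^c` is an orbit and `Q^(c+1)` is not. Since `|Q| = 3`, either all letters are
rigid after all words of length `c`, and then the second criterion shows that the group is finite,
or after each word of length `c` exactly one letter is rigid and the two others can be exchanged
(`Branching`). In this case, call a word orbital (`NonRigidWord`) if none of its letters is rigid
after the `c` preceding ones. The local action at the end of an orbital word is either trivial, in
which case the word is called dead, or exchanges its two orbital continuations.

If no orbital word is dead, any periodic orbital sequence satisfies the first criterion
(`Branching.exists_periodic`). If orbital words of length `N` are dead, with `N` minimal, then the
orbital words of length `N` form a single orbit. Comparing the orbit of a word of length `N + 1`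
with the orbits of its prefix and its suffix of length `N` gives a left-right symmetry
(`left_unique`): the first letter of an orbital word of length `N + 1` is determined, within its
orbit, by the others. So an element of `Sec w`, with `w` orbital of length at least `N`, lies in
`Sec (y w)` for every orbital left extension `y w`, and it also follows orbital right extensions
without moving them. Zigzagging, `Branching.finite_of_dead` reaches the remaining continuations too
and concludes with the second criterion that the group is finite.
-/

namespace MealyFormal

variable {Q X : Type*}

/-- Extended transition function of the dual automaton: the action of a letter
`i ∈ Σ` on words over the stateset `Q`, defined by
`δ_i(ε) = ε` and `δ_i(x w) = δ_i(x) δ_{ρ_x(i)}(w)`. -/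
def dExt (δ : X → Q → Q) (ρ : Q → X → X) : X → List Q → List Q
  | _, [] => []
  | i, x :: w => δ i x :: dExt δ ρ (ρ x i) w

/-- The action `δ_s = δ_{s_n} ∘ ⋯ ∘ δ_{s_1}` of a word `s` over `Σ` on words over `Q`. -/
def dWord (δ : X → Q → Q) (ρ : Q → X → X) : List X → List Q → List Q
  | [], u => u
  | i :: s, u => dWord δ ρ s (dExt δ ρ i u)

/-- Extended production function: the action of a state `x ∈ Q` on words over the
alphabet `Σ`, defined by `ρ_x(ε) = ε` and `ρ_x(i s) = ρ_x(i) ρ_{δ_i(x)}(s)`. -/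
def rExt (δ : X → Q → Q) (ρ : Q → X → X) : Q → List X → List X
  | _, [] => []
  | x, i :: s => ρ x i :: rExt δ ρ (δ i x) s

/-- The action `ρ_u = ρ_{x_n} ∘ ⋯ ∘ ρ_{x_1}` of a word `u = x_1⋯x_n` over `Q`
on words over `Σ`. -/
def rWord (δ : X → Q → Q) (ρ : Q → X → X) : List Q → List X → List X
  | [], s => s
  | x :: u, s => rWord δ ρ u (rExt δ ρ x s)

/-- `v` lies in the orbit of `u` under the action of the dual automaton. -/
def InOrbit (δ : X → Q → Q) (ρ : Q → X → X) (u v : List Q) : Prop :=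
  ∃ s : List X, dWord δ ρ s u = v

/-- The orbit (connected component of the corresponding power) of a word over `Q`. -/
def orbit (δ : X → Q → Q) (ρ : Q → X → X) (u : List Q) : Set (List Q) :=
  {v | InOrbit δ ρ u v}

/-- The action of the dual automaton on `Q^n` is transitive, i.e. `A^n` is connected. -/
def LevelTransitive (δ : X → Q → Q) (ρ : Q → X → X) (n : ℕ) : Prop :=
  ∀ u v : List Q, u.length = n → v.length = n → InOrbit δ ρ u v

/-- The label `ℓ(u x)` of the nonempty word `u x`:
the number of `z ∈ Q` with `u z` in the orbit of `u x`. -/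
noncomputable def label (δ : X → Q → Q) (ρ : Q → X → X) (u : List Q) (x : Q) : ℕ :=
  Set.ncard {z : Q | InOrbit δ ρ (u ++ [x]) (u ++ [z])}

/-- Prefix of length `i` of the (infinite) word `w = w_1 w_2 ⋯`. -/
def pref (w : ℕ → Q) (i : ℕ) : List Q := (List.range i).map w

/-- The `n`-th power `u^n` of a word `u`. -/
def wpow (u : List Q) (n : ℕ) : List Q := (List.replicate n u).flatten

/-- The group generated by the Mealy automaton: the subgroup of permutations of `Σ*`
generated by the production functions `ρ_x`, `x ∈ Q`. -/
def autGroup (δ : X → Q → Q) (ρ : Q → X → X) : Subgroup (Equiv.Perm (List X)) :=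
  Subgroup.closure {π : Equiv.Perm (List X) | ∃ q : Q, ⇑π = rExt δ ρ q}

/-- The semigroup of maps `Σ* → Σ*` generated under composition by the `ρ_x`, `x ∈ Q`. -/
def prodSemigroup (δ : X → Q → Q) (ρ : Q → X → X) :
    Subsemigroup (Function.End (List X)) :=
  Subsemigroup.closure {f : Function.End (List X) | ∃ q : Q, f = rExt δ ρ q}

/-- The semigroup of maps `Q* → Q*` generated under composition by the `δ_i`, `i ∈ Σ`. -/
def dualSemigroup (δ : X → Q → Q) (ρ : Q → X → X) :
    Subsemigroup (Function.End (List Q)) :=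
  Subsemigroup.closure {f : Function.End (List Q) | ∃ i : X, f = dExt δ ρ i}

/-- A word `w` over `Q` is orbital if all its factors of length `c+1`
belong to the reduction orbit `O2`. -/
def Orbital (c : ℕ) (O2 : Set (List Q)) (w : List Q) : Prop :=
  ∀ f : List Q, f.length = c + 1 → f <:+: w → f ∈ O2

/-- A word is cyclically orbital if each of its powers is orbital. -/
def CycOrbital (c : ℕ) (O2 : Set (List Q)) (w : List Q) : Prop :=
  ∀ n : ℕ, Orbital c O2 (wpow w n)

/-- The standing setup: `A` is a connected invertible-reversible Mealy automaton
with 3 states, `0 < c = cd(A) < ∞`, and `Q^{c+1}` splits into exactly two orbits,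
of sizes `2·3^c` and `3^c`; `O2` is the reduction orbit, of size `2·3^c`. -/
structure StandingSetup (δ : X → Q → Q) (ρ : Q → X → X) (c : ℕ) (O2 : Set (List Q)) :
    Prop where
  card_three : Nat.card Q = 3
  invertible : ∀ q : Q, Function.Bijective (ρ q)
  reversible : ∀ i : X, Function.Bijective (δ i)
  connected : LevelTransitive δ ρ 1
  c_pos : 0 < c
  trans_c : LevelTransitive δ ρ c
  not_trans_succ : ¬ LevelTransitive δ ρ (c + 1)
  O2_is_orbit : ∃ w : List Q, w.length = c + 1 ∧ O2 = orbit δ ρ w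
  O2_card : O2.ncard = 2 * 3 ^ c
  other_is_orbit : ∃ w : List Q, w.length = c + 1 ∧
    orbit δ ρ w = {v : List Q | v.length = c + 1} \ O2
  other_card : ({v : List Q | v.length = c + 1} \ O2).ncard = 3 ^ c

/-! ### Actions on words, orbits and sections of stabilizers -/

section Basic

variable {δ : X → Q → Q} {ρ : Q → X → X}

/-- The action of a word over `Q` on a single letter of `Σ`. -/
def letterOut (ρ : Q → X → X) : List Q → X → X
  | [], i => i
  | x :: u, i => letterOut ρ u (ρ x i)

lemma rWord_cons_letter (u : List Q) (i : X) (s : List X) :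
    rWord δ ρ u (i :: s) = letterOut ρ u i :: rWord δ ρ (dExt δ ρ i u) s := by
  induction u generalizing i s with
  | nil => rfl
  | cons x u ih => simp only [rWord, rExt, dExt, letterOut, ih]

lemma rWord_nil (u : List Q) : rWord δ ρ u [] = [] := by
  induction u with
  | nil => rfl
  | cons x u ih => simpa [rWord, rExt] using ih

lemma dExt_append (i : X) (u v : List Q) :
    dExt δ ρ i (u ++ v) = dExt δ ρ i u ++ dExt δ ρ (letterOut ρ u i) v := by
  induction u generalizing i with
  | nil => rfl
  | cons x u ih => simp [dExt, letterOut, ih]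

lemma dWord_append (s : List X) (u v : List Q) :
    dWord δ ρ s (u ++ v) = dWord δ ρ s u ++ dWord δ ρ (rWord δ ρ u s) v := by
  induction s generalizing u v with
  | nil => simp [rWord_nil, dWord]
  | cons i s ih => simp only [dWord, dExt_append, ih, rWord_cons_letter]

lemma dWord_append_letters (s t : List X) (u : List Q) :
    dWord δ ρ (s ++ t) u = dWord δ ρ t (dWord δ ρ s u) := by
  induction s generalizing u with
  | nil => rfl
  | cons i s ih => simp only [List.cons_append, dWord, ih]

lemma rWord_append (u v : List Q) (s : List X) :
    rWord δ ρ (u ++ v) s = rWord δ ρ v (rWord δ ρ u s) := by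
  induction u generalizing s with
  | nil => rfl
  | cons i u ih => simp only [List.cons_append, rWord, ih]

lemma rWord_append_letters (u : List Q) (s t : List X) :
    rWord δ ρ u (s ++ t) = rWord δ ρ u s ++ rWord δ ρ (dWord δ ρ s u) t := by
  induction s generalizing u with
  | nil => simp [rWord_nil, dWord]
  | cons i s ih => simp only [List.cons_append, rWord_cons_letter, dWord, ih]

@[simp] lemma dExt_length (i : X) (u : List Q) : (dExt δ ρ i u).length = u.length := by
  induction u generalizing i with
  | nil => rfl
  | cons x u ih => simp [dExt, ih]

@[simp] lemma dWord_length (s : List X) (u : List Q) : (dWord δ ρ s u).length = u.length := by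
  induction s generalizing u with
  | nil => rfl
  | cons i s ih => simp [dWord, ih]

lemma dWord_singleton (s : List X) (z : Q) : ∃ z', dWord δ ρ s [z] = [z'] :=
  List.length_eq_one_iff.1 (by simp)

lemma dExt_injective (hrev : ∀ i : X, Function.Bijective (δ i)) (i : X) :
    Function.Injective (dExt δ ρ i) := by
  intro u v h
  induction u generalizing i v with
  | nil => cases v with
    | nil => rfl
    | cons y v => simp [dExt] at h
  | cons x u ih => cases v with
    | nil => simp [dExt] at h
    | cons y v =>
      simp only [dExt, List.cons.injEq] at h
      obtain rfl := (hrev i).1 h.1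
      rw [ih _ h.2]

lemma dWord_injective (hrev : ∀ i : X, Function.Bijective (δ i)) (s : List X) :
    Function.Injective (dWord δ ρ s) := by
  induction s with
  | nil => exact fun _ _ h => h
  | cons i s ih => exact fun u v h => dExt_injective hrev i (ih h)

lemma rExt_bijective (hinv : ∀ q : Q, Function.Bijective (ρ q)) (x : Q) :
    Function.Bijective (rExt δ ρ x) := by
  constructor
  · intro s t h
    induction s generalizing x t with
    | nil => cases t with
      | nil => rfl
      | cons j t => simp [rExt] at h
    | cons i s ih => cases t with
      | nil => simp [rExt] at h
      | cons j t =>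
        simp only [rExt, List.cons.injEq] at h
        obtain rfl := (hinv x).1 h.1
        rw [ih _ h.2]
  · intro t
    induction t generalizing x with
    | nil => exact ⟨[], rfl⟩
    | cons j t ih =>
      obtain ⟨i, rfl⟩ := (hinv x).2 j
      obtain ⟨s, rfl⟩ := ih (δ i x)
      exact ⟨i :: s, rfl⟩

lemma rWord_bijective (hinv : ∀ q : Q, Function.Bijective (ρ q)) (u : List Q) :
    Function.Bijective (rWord δ ρ u) := by
  induction u with
  | nil => exact Function.bijective_id
  | cons x u ih => exact ih.comp (rExt_bijective hinv x)

lemma InOrbit.trans {u v w : List Q} (h : InOrbit δ ρ u v) (h' : InOrbit δ ρ v w) :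
    InOrbit δ ρ u w := by
  obtain ⟨s, rfl⟩ := h
  obtain ⟨t, rfl⟩ := h'
  exact ⟨s ++ t, dWord_append_letters s t u⟩

lemma InOrbit.refl (u : List Q) : InOrbit δ ρ u u := ⟨[], rfl⟩

lemma InOrbit.length_eq {u v : List Q} (h : InOrbit δ ρ u v) : v.length = u.length := by
  obtain ⟨s, rfl⟩ := h; simp

/-- Each `δ_s` permutes the finite set of words of a given length, so some iterate of it
undoes it and orbits are classes of an equivalence relation. -/
lemma InOrbit.symm [Finite Q] (hrev : ∀ i : X, Function.Bijective (δ i)) {u v : List Q}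
    (h : InOrbit δ ρ u v) : InOrbit δ ρ v u := by
  obtain ⟨s, rfl⟩ := h
  have hfin : Finite {l : List Q // l.length = u.length} := List.finite_length_eq Q u.length
  let F : {l : List Q // l.length = u.length} → {l : List Q // l.length = u.length} :=
    fun l => ⟨dWord δ ρ s l.1, by simp [l.2]⟩
  have hF : Function.Injective F := fun a b hab =>
    Subtype.ext (dWord_injective hrev s (congrArg Subtype.val hab))
  obtain ⟨n, hn, hper⟩ := hF.mem_periodicPts ⟨u, rfl⟩
  have key : ∀ m (l : {l : List Q // l.length = u.length}), InOrbit δ ρ l.1 (F^[m] l).1 := by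
    intro m
    induction m with
    | zero => exact fun l => InOrbit.refl _
    | succ m ih => exact fun l => InOrbit.trans ⟨s, rfl⟩ (ih (F l))
  obtain ⟨m, rfl⟩ : ∃ m, n = m + 1 := ⟨n - 1, by omega⟩
  have h1 := key m (F ⟨u, rfl⟩)
  rw [← Function.iterate_succ_apply, hper] at h1
  exact h1

lemma InOrbit.of_append {a u v b : List Q} (hl : v.length = u.length)
    (h : InOrbit δ ρ (a ++ u) (b ++ v)) : InOrbit δ ρ u v := by
  obtain ⟨s, h⟩ := h
  rw [dWord_append] at h
  exact ⟨_, (List.append_inj' h (by simp [hl])).2⟩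

lemma orbit_finite [Finite Q] (u : List Q) : (orbit δ ρ u).Finite :=
  (List.finite_length_eq Q u.length).subset fun _ h => InOrbit.length_eq h

/-- `Rigid u z`: the letter `z` is fixed by the local action at the end of `u`, that is,
the label `ℓ(u z)` is `1`. -/
def Rigid (δ : X → Q → Q) (ρ : Q → X → X) (u : List Q) (z : Q) : Prop :=
  ∀ z', InOrbit δ ρ (u ++ [z]) (u ++ [z']) → z' = z

/-- The words `ρ_v(s)` for `s` in the stabilizer of `v`. They act on what follows `v`; this is the
(semigroup version of the) group of sections at `v` of the stabilizer of `v`. -/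
def Sec (δ : X → Q → Q) (ρ : Q → X → X) (v : List Q) : Set (List X) :=
  {t | ∃ s, dWord δ ρ s v = v ∧ rWord δ ρ v s = t}

lemma Rigid.append_left {v : List Q} {z : Q} (h : Rigid δ ρ v z) (a : List Q) :
    Rigid δ ρ (a ++ v) z := by
  intro z' hz'
  rw [List.append_assoc, List.append_assoc] at hz'
  exact h z' (hz'.of_append (by simp))

lemma Rigid.of_inOrbit [Finite Q] (hrev : ∀ i : X, Function.Bijective (δ i))
    {p p' : List Q} {z z' : Q} (h : InOrbit δ ρ (p ++ [z]) (p' ++ [z'])) (hz : Rigid δ ρ p z) :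
    Rigid δ ρ p' z' := by
  intro z'' h''
  obtain ⟨r, hr⟩ := h.symm hrev
  have hl : p.length = p'.length := by simpa using congrArg List.length hr.symm
  have hr' := hr
  rw [dWord_append] at hr
  obtain ⟨h1, h2⟩ := List.append_inj hr (by simp [hl])
  obtain ⟨z3, h3⟩ := dWord_singleton (δ := δ) (ρ := ρ) (rWord δ ρ p' r) z''
  have h4 : dWord δ ρ r (p' ++ [z'']) = p ++ [z3] := by rw [dWord_append, h1, h3]
  have h5 := hz z3 ((h.trans h'').trans ⟨r, h4⟩)
  rw [h5, ← hr'] at h4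
  simpa using dWord_injective hrev r h4

lemma Sec.fix {p : List Q} {z : Q} {t : List X} (ht : t ∈ Sec δ ρ p) (hz : Rigid δ ρ p z) :
    dWord δ ρ t [z] = [z] := by
  obtain ⟨s, hs, rfl⟩ := ht
  obtain ⟨z', h'⟩ := dWord_singleton (δ := δ) (ρ := ρ) (rWord δ ρ p s) z
  rw [h', hz z' ⟨s, by rw [dWord_append, hs, h']⟩]

lemma Sec.of_append_left {a v : List Q} {t : List X} (ht : t ∈ Sec δ ρ (a ++ v)) :
    t ∈ Sec δ ρ v := by
  obtain ⟨s, hs, rfl⟩ := ht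
  rw [dWord_append] at hs
  exact ⟨rWord δ ρ a s, (List.append_inj hs (by simp)).2, (rWord_append ..).symm⟩

lemma Sec.append {v j : List Q} {t : List X} (ht : t ∈ Sec δ ρ v) (hj : dWord δ ρ t j = j) :
    rWord δ ρ j t ∈ Sec δ ρ (v ++ j) := by
  obtain ⟨s, hs, rfl⟩ := ht
  exact ⟨s, by rw [dWord_append, hs, hj], rWord_append ..⟩

lemma Sec.exists_of_append {v j : List Q} {t : List X} (ht : t ∈ Sec δ ρ (v ++ j)) :
    ∃ t₁ ∈ Sec δ ρ v, dWord δ ρ t₁ j = j ∧ rWord δ ρ j t₁ = t := by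
  obtain ⟨s, hs, rfl⟩ := ht
  rw [dWord_append] at hs
  obtain ⟨h1, h2⟩ := List.append_inj hs (by simp)
  exact ⟨_, ⟨s, h1, rfl⟩, h2, (rWord_append ..).symm⟩

/-- If the word `y w = p z` has its two factors of length `|p|` in one orbit, and `z` is rigid
after `p`, then `y` is rigid before `w`: the orbit of `p z` injects into that of `p` by deleting
last letters and surjects onto the orbit of `w`, which is the same finite set, by deleting first
letters. -/
lemma left_unique [Finite Q] (hinv : ∀ q : Q, Function.Bijective (ρ q))
    (hrev : ∀ i : X, Function.Bijective (δ i)) {p w : List Q} {y y' z : Q}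
    (heq : y :: w = p ++ [z]) (horb : InOrbit δ ρ p w) (hz : Rigid δ ρ p z)
    (hy : InOrbit δ ρ (y :: w) (y' :: w)) : y' = y := by
  have hinj : Set.InjOn List.dropLast (orbit δ ρ (y :: w)) := by
    intro a ha b hb hab
    have hane : a ≠ [] := by
      rintro rfl; simpa using InOrbit.length_eq ha
    have hbne : b ≠ [] := by
      rintro rfl; simpa using InOrbit.length_eq hb
    obtain ⟨a', x, rfl⟩ : ∃ a' x, a = a' ++ [x] := ⟨_, _, (List.dropLast_append_getLast hane).symm⟩
    obtain ⟨b', x', rfl⟩ : ∃ a' x, b = a' ++ [x] := ⟨_, _, (List.dropLast_append_getLast hbne).symm⟩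
    simp only [List.dropLast_concat] at hab
    subst hab
    have ha' : InOrbit δ ρ (y :: w) (a' ++ [x]) := ha
    have hb' : InOrbit δ ρ (y :: w) (a' ++ [x']) := hb
    rw [(hz.of_inOrbit hrev (heq ▸ ha')) x' ((ha'.symm hrev).trans hb')]
  have hle : (orbit δ ρ (y :: w)).ncard ≤ (orbit δ ρ w).ncard := by
    refine Set.ncard_le_ncard_of_injOn List.dropLast ?_ hinj (orbit_finite w)
    rintro a ⟨s, rfl⟩
    rw [heq, dWord_append]
    obtain ⟨z', h'⟩ := dWord_singleton (δ := δ) (ρ := ρ) (rWord δ ρ p s) z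
    rw [h', List.dropLast_concat]
    exact (horb.symm hrev).trans ⟨s, rfl⟩
  have hsurj : Set.SurjOn List.tail (orbit δ ρ (y :: w)) (orbit δ ρ w) := by
    rintro _ ⟨t, rfl⟩
    obtain ⟨s, rfl⟩ := (rWord_bijective (δ := δ) hinv [y]).2 t
    refine ⟨dWord δ ρ s ([y] ++ w), ⟨s, rfl⟩, ?_⟩
    rw [dWord_append]
    obtain ⟨y'', h'⟩ := dWord_singleton (δ := δ) (ρ := ρ) s y
    rw [h']; rfl
  have hmaps : ∀ a ∈ orbit δ ρ (y :: w), List.tail a ∈ orbit δ ρ w := by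
    rintro _ ⟨s, rfl⟩
    change List.tail (dWord δ ρ s ([y] ++ w)) ∈ _
    rw [dWord_append]
    obtain ⟨y'', h'⟩ := dWord_singleton (δ := δ) (ρ := ρ) s y
    rw [h']; exact ⟨_, rfl⟩
  have himg : List.tail '' orbit δ ρ (y :: w) = orbit δ ρ w :=
    Set.Subset.antisymm (Set.image_subset_iff.2 hmaps) hsurj
  have hinj' : Set.InjOn List.tail (orbit δ ρ (y :: w)) := by
    refine Set.injOn_of_ncard_image_eq (le_antisymm ?_ ?_) (orbit_finite _)
    · exact Set.ncard_image_le (orbit_finite _)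
    · rw [himg]; exact hle
  have := hinj' hy (InOrbit.refl (y :: w)) rfl
  simpa using this

lemma Sec.cons (hinv : ∀ q : Q, Function.Bijective (ρ q)) {w : List Q} {y : Q}
    (huniq : ∀ y', InOrbit δ ρ (y :: w) (y' :: w) → y' = y) {t : List X} (ht : t ∈ Sec δ ρ w) :
    t ∈ Sec δ ρ (y :: w) := by
  obtain ⟨s', hs, rfl⟩ := ht
  obtain ⟨s, rfl⟩ := (rWord_bijective (δ := δ) hinv [y]).2 s'
  obtain ⟨y', h'⟩ := dWord_singleton (δ := δ) (ρ := ρ) s y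
  have h1 : dWord δ ρ s ([y] ++ w) = y' :: w := by rw [dWord_append, hs, h']; rfl
  obtain rfl := huniq y' ⟨s, h1⟩
  exact ⟨s, h1, rWord_append [y'] w s⟩

end Basic

/-! ### Criteria for finiteness and for infinite order -/

section Finiteness

variable {δ : X → Q → Q} {ρ : Q → X → X}

lemma finite_range_of_factorsThrough {α β γ : Type*} {f : α → β} {g : α → γ}
    (h : Function.FactorsThrough f g) (hg : (Set.range g).Finite) : (Set.range f).Finite := by
  rcases isEmpty_or_nonempty α with hα | ⟨⟨a⟩⟩
  · exact Set.finite_range f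
  · refine (hg.image (Function.extend g f fun _ => f a)).subset ?_
    rintro _ ⟨b, rfl⟩
    exact ⟨g b, ⟨b, rfl⟩, h.extend_apply _ b⟩

lemma wpow_succ (u : List Q) (k : ℕ) : wpow u (k + 1) = u ++ wpow u k := by
  simp [wpow, List.replicate_succ]

lemma wpow_add (u : List Q) (k l : ℕ) : wpow u (k + l) = wpow u k ++ wpow u l := by
  rw [wpow, List.replicate_add, List.flatten_append]; rfl

lemma rWord_wpow (u : List Q) (k : ℕ) : rWord δ ρ (wpow u k) = (rWord δ ρ u)^[k] := by
  induction k with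
  | zero => rfl
  | succ k ih =>
    funext s
    rw [wpow_succ, rWord_append, ih, Function.iterate_succ_apply]

lemma coe_pow_eq {π : Equiv.Perm (List X)} {u : List Q} (h : ⇑π = rWord δ ρ u) (k : ℕ) :
    ⇑(π ^ k) = rWord δ ρ (wpow u k) := by
  rw [rWord_wpow, ← h, Equiv.Perm.iterate_eq_pow]

/-- If the sections at `P` of the stabilizer of `P` are trivial, then the dual automaton generates
a finite semigroup, since `δ_{ρ_P(s)}` depends only on `δ_s(P)`. -/
lemma dual_finite [Finite Q] (hinv : ∀ q : Q, Function.Bijective (ρ q))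
    (hrev : ∀ i : X, Function.Bijective (δ i)) {P : List Q}
    (hP : ∀ t ∈ Sec δ ρ P, ∀ q, dWord δ ρ t q = q) :
    (Set.range (dWord δ ρ)).Finite := by
  have hrange : Set.range (dWord δ ρ) = Set.range fun s => dWord δ ρ (rWord δ ρ P s) :=
    ((rWord_bijective hinv P).2.range_comp (dWord δ ρ)).symm
  rw [hrange]
  refine finite_range_of_factorsThrough (g := fun s => dWord δ ρ s P) ?_ (orbit_finite P)
  intro s s' h
  obtain ⟨r, hr⟩ := InOrbit.symm hrev (⟨s, rfl⟩ : InOrbit δ ρ P (dWord δ ρ s P))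
  have key : ∀ s₁, dWord δ ρ s₁ P = dWord δ ρ s P → ∀ q,
      dWord δ ρ (rWord δ ρ (dWord δ ρ s P) r) (dWord δ ρ (rWord δ ρ P s₁) q) = q := by
    intro s₁ h₁ q
    rw [← dWord_append_letters, ← h₁, ← rWord_append_letters]
    exact hP _ ⟨s₁ ++ r, by rw [dWord_append_letters, h₁, hr], rfl⟩ q
  funext q
  exact dWord_injective hrev _ ((key s rfl q).trans (key s' h.symm q).symm)

lemma rWord_eq_of_letterOut {q q' : List Q}
    (h : ∀ s i, letterOut ρ (dWord δ ρ s q) i = letterOut ρ (dWord δ ρ s q') i) (s : List X) :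
    rWord δ ρ q s = rWord δ ρ q' s := by
  induction s generalizing q q' with
  | nil => simp [rWord_nil]
  | cons i s ih =>
    rw [rWord_cons_letter, rWord_cons_letter, ih fun s j => h (i :: s) j]
    exact congrArg (· :: _) (h [] i)

lemma autGroup_finite [Finite X] (hfin : (Set.range (dWord δ ρ)).Finite) :
    Finite ↥(autGroup δ ρ) := by
  have := hfin.to_subtype
  have hr : (Set.range (rWord δ ρ)).Finite := by
    refine finite_range_of_factorsThrough
      (g := fun q (d : Set.range (dWord δ ρ)) (i : X) => letterOut ρ (d.1 q) i) ?_
      (Set.toFinite _)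
    intro q q' h
    funext s
    exact rWord_eq_of_letterOut (fun s i => congrFun (congrFun h ⟨_, s, rfl⟩) i) s
  have hM : {π : Equiv.Perm (List X) | ∃ q, rWord δ ρ q = ⇑π}.Finite :=
    hr.preimage (f := fun π : Equiv.Perm (List X) => ⇑π) DFunLike.coe_injective.injOn
  refine (hM.subset ?_ : Set.Finite (autGroup δ ρ : Set (Equiv.Perm (List X)))).to_subtype
  intro π hπ
  induction hπ using Subgroup.closure_induction with
  | mem π h =>
    obtain ⟨q, h⟩ := h
    exact ⟨[q], h.symm⟩
  | one => exact ⟨[], rfl⟩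
  | mul π π' _ _ h h' =>
    obtain ⟨q, h⟩ := h
    obtain ⟨q', h'⟩ := h'
    refine ⟨q' ++ q, ?_⟩
    funext s
    rw [rWord_append, h, h']; rfl
  | inv π _ h =>
    obtain ⟨q, h⟩ := h
    -- A permutation all of whose powers lie in a finite set has finite order.
    have hnot : ¬ Function.Injective fun n : ℕ => π ^ n := by
      intro hinj
      refine Set.infinite_range_of_injective hinj (hM.subset ?_)
      rintro _ ⟨n, rfl⟩
      exact ⟨wpow q n, (coe_pow_eq h.symm n).symm⟩
    have hfo : IsOfFinOrder π := by
      by_contra hno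
      exact hnot (injective_pow_iff_not_isOfFinOrder.2 hno)
    obtain ⟨n, hn, h1⟩ := isOfFinOrder_iff_pow_eq_one.1 hfo
    obtain ⟨m, rfl⟩ : ∃ m, n = m + 1 := ⟨n - 1, by omega⟩
    have : π⁻¹ = π ^ m := by
      rw [inv_eq_iff_mul_eq_one, ← pow_succ', h1]
    rw [this]
    exact ⟨wpow q m, (coe_pow_eq h.symm m).symm⟩

/-- Finiteness criterion: a set of words which the sections of stabilizers can follow forever,
never moving a letter. -/
lemma finite_of_closed [Finite Q] [Finite X] (hinv : ∀ q : Q, Function.Bijective (ρ q))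
    (hrev : ∀ i : X, Function.Bijective (δ i)) {C : Set (List Q)} (hne : C.Nonempty)
    (hC : ∀ P ∈ C, ∀ t ∈ Sec δ ρ P, ∀ z,
      dWord δ ρ t [z] = [z] ∧ ∃ P' ∈ C, rWord δ ρ [z] t ∈ Sec δ ρ P') :
    Finite ↥(autGroup δ ρ) := by
  have key : ∀ q, ∀ P ∈ C, ∀ t ∈ Sec δ ρ P, dWord δ ρ t q = q := by
    intro q
    induction q with
    | nil => exact fun P _ t _ => List.length_eq_zero_iff.1 (by simp)
    | cons z q ih =>
      intro P hP t ht
      obtain ⟨h1, P', hP', h2⟩ := hC P hP t ht z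
      have h3 := dWord_append (δ := δ) (ρ := ρ) t [z] q
      rw [h1, ih P' hP' _ h2] at h3
      exact h3
  obtain ⟨P, hP⟩ := hne
  exact autGroup_finite (dual_finite hinv hrev fun t ht q => key q P hP t ht)

/-- Infinite order criterion: the last letter of `u^k` is eventually not rigid after the letters
before it. If `ρ_V` is the identity, every word in the orbit of `V V` is a square `v v`, so its last
letter is determined by the letters before it; this is used for a large power `V` of `u`. -/
lemma infinite_order {u : List Q} (hu : u ≠ []) {K : ℕ}
    (h : ∀ k, K ≤ k → ∃ p x, wpow u k = p ++ [x] ∧ ¬ Rigid δ ρ p x) (k : ℕ) (hk : 0 < k) :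
    rWord δ ρ (wpow u k) ≠ id := by
  intro hid
  set m := k * (K + 1) with hm
  have hmpos : 0 < m := by positivity
  have hmK : K ≤ m := by nlinarith
  obtain ⟨p, x, hpx, hr⟩ := h (m + m) (by omega)
  have hV : rWord δ ρ (wpow u m) = id := by
    rw [rWord_wpow, hm, Function.iterate_mul, ← rWord_wpow, hid, Function.iterate_id]
  have hVne : wpow u m ≠ [] := by
    obtain ⟨m', hm'⟩ : ∃ m', m = m' + 1 := ⟨m - 1, by omega⟩
    rw [hm', wpow_succ]; simp [hu]
  rw [wpow_add] at hpx
  generalize wpow u m = V at hV hVne hpx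
  refine hr ?_
  rintro x' ⟨s, hs⟩
  rw [← hpx, dWord_append, hV, id] at hs
  have hl : (dWord δ ρ s V).length = V.length := dWord_length s V
  generalize dWord δ ρ s V = v at hs hl
  have hvne : v ≠ [] := by
    rintro rfl
    exact hVne (List.length_eq_zero_iff.1 hl.symm)
  obtain ⟨V₀, y, rfl⟩ : ∃ a y, V = a ++ [y] := ⟨_, _, (List.dropLast_append_getLast hVne).symm⟩
  obtain ⟨v₀, y', rfl⟩ : ∃ a y, v = a ++ [y] := ⟨_, _, (List.dropLast_append_getLast hvne).symm⟩
  rw [← List.append_assoc] at hs hpx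
  obtain ⟨h1, h2⟩ := List.append_inj' hpx rfl
  obtain ⟨h3, h4⟩ := List.append_inj' hs rfl
  have h5 := (List.append_inj (h3.trans h1.symm) hl).1
  have h6 := (List.append_inj' h5 rfl).2
  simp only [List.cons.injEq, and_true] at h2 h4 h6
  rw [← h2, ← h4, h6]

end Finiteness

/-! ### Orbital words -/

section Orbital

variable {δ : X → Q → Q} {ρ : Q → X → X} {c : ℕ}

/-- No letter of `w` is rigid after the `c` letters preceding it, i.e. every factor of length
`c + 1` has label different from `1`. -/
def NonRigidWord (δ : X → Q → Q) (ρ : Q → X → X) (c : ℕ) (w : List Q) : Prop :=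
  ∀ a u z b, u.length = c → w = a ++ (u ++ z :: b) → ¬ Rigid δ ρ u z

lemma NonRigidWord.factor {a w b : List Q} (h : NonRigidWord δ ρ c (a ++ (w ++ b))) :
    NonRigidWord δ ρ c w := by
  rintro a' u z b' hu rfl
  exact h (a ++ a') u z (b' ++ b) hu (by simp)

lemma NonRigidWord.left {w b : List Q} (h : NonRigidWord δ ρ c (w ++ b)) :
    NonRigidWord δ ρ c w := NonRigidWord.factor (a := []) h

lemma NonRigidWord.right {a w : List Q} (h : NonRigidWord δ ρ c (a ++ w)) :
    NonRigidWord δ ρ c w := NonRigidWord.factor (a := a) (b := []) (by simpa using h)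

lemma NonRigidWord.of_length_le {w : List Q} (h : w.length ≤ c) : NonRigidWord δ ρ c w := by
  rintro a u z b hu rfl
  simp at h
  omega

lemma NonRigidWord.snoc {a u : List Q} {z : Q} (hu : u.length = c)
    (h : NonRigidWord δ ρ c (a ++ u)) (hz : ¬ Rigid δ ρ u z) :
    NonRigidWord δ ρ c (a ++ u ++ [z]) := by
  intro a' u' z' b' hu' heq
  rcases List.eq_nil_or_concat' b' with rfl | ⟨b'', z'', rfl⟩
  · rw [← List.append_assoc] at heq
    obtain ⟨h1, h2⟩ := List.append_inj' heq rfl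
    obtain ⟨-, rfl⟩ := List.append_inj' h1 (hu.trans hu'.symm)
    simp only [List.cons.injEq, and_true] at h2
    rwa [← h2]
  · have : a ++ u ++ [z] = (a' ++ (u' ++ z' :: b'')) ++ [z''] := by simp [heq]
    exact h a' u' z' b'' hu' (List.append_inj' this rfl).1

lemma NonRigidWord.cons {v b : List Q} {y z : Q} (hv : (y :: v).length = c)
    (h : NonRigidWord δ ρ c (v ++ z :: b)) (hz : ¬ Rigid δ ρ (y :: v) z) :
    NonRigidWord δ ρ c (y :: (v ++ z :: b)) := by
  intro a' u' z' b' hu' heq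
  cases a' with
  | nil =>
    obtain ⟨h1, h2⟩ := List.append_inj (s₁ := y :: v) (t₁ := z :: b)
      (s₂ := u') (t₂ := z' :: b') heq (hv.trans hu'.symm)
    simp only [List.cons.injEq] at h2
    rwa [← h1, ← h2.1]
  | cons y' a'' =>
    simp only [List.cons_append, List.cons.injEq] at heq
    exact h a'' u' z' b' hu' heq.2

lemma NonRigidWord.of_inOrbit [Finite Q] (hrev : ∀ i : X, Function.Bijective (δ i))
    {w w' : List Q} (h : InOrbit δ ρ w w') (hw : NonRigidWord δ ρ c w) :
    NonRigidWord δ ρ c w' := by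
  rintro a u z b hu rfl hr
  obtain ⟨s, rfl⟩ := h.symm hrev
  have h1 : a ++ (u ++ z :: b) = a ++ (u ++ ([z] ++ b)) := rfl
  rw [h1, dWord_append, dWord_append, dWord_append] at hw
  obtain ⟨z', hz'⟩ := dWord_singleton (δ := δ) (ρ := ρ) (rWord δ ρ u (rWord δ ρ a s)) z
  rw [hz'] at hw
  refine hw _ _ z' _ (by simp [hu]) rfl (hr.of_inOrbit hrev ⟨rWord δ ρ a s, ?_⟩)
  rw [dWord_append, hz']

lemma exists_third (hcard : Nat.card Q = 3) (a b : Q) : ∃ f, f ≠ a ∧ f ≠ b := by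
  have : Finite Q := Nat.finite_of_card_ne_zero (by omega)
  let e := Finite.equivFinOfCardEq hcard
  obtain ⟨f, h1, h2⟩ : ∃ f : Fin 3, f ≠ e a ∧ f ≠ e b := by
    generalize e a = i
    generalize e b = j
    revert i j
    decide
  exact ⟨e.symm f, fun h => h1 (by simp [← h]), fun h => h2 (by simp [← h])⟩

lemma three_cases (hcard : Nat.card Q = 3) {a b f : Q} (hab : a ≠ b) (hfa : f ≠ a) (hfb : f ≠ b)
    (x : Q) : x = a ∨ x = b ∨ x = f := by
  have : Finite Q := Nat.finite_of_card_ne_zero (by omega)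
  let e := Finite.equivFinOfCardEq hcard
  have key : ∀ i j k l : Fin 3, i ≠ j → k ≠ i → k ≠ j → l = i ∨ l = j ∨ l = k := by decide
  simpa using key (e a) (e b) (e f) (e x) (by simpa) (by simpa) (by simpa)

/-- The branching situation: `Q^c` is a single orbit, and after a word of length `c` one letter is
rigid and the two others can be exchanged. -/
structure Branching (δ : X → Q → Q) (ρ : Q → X → X) (c : ℕ) : Prop where
  card : Nat.card Q = 3
  inv : ∀ q : Q, Function.Bijective (ρ q)
  rev : ∀ i : X, Function.Bijective (δ i)
  pos : 0 < c
  trans : LevelTransitive δ ρ c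
  rigid_iff : ∀ u : List Q, u.length = c → ∃ f, ∀ z, Rigid δ ρ u z ↔ z = f

lemma Branching.of_not_transitive [Finite Q] (hcard : Nat.card Q = 3)
    (hinv : ∀ q : Q, Function.Bijective (ρ q)) (hrev : ∀ i : X, Function.Bijective (δ i))
    (hc : 0 < c) (htrans : LevelTransitive δ ρ c) (hnot : ¬ LevelTransitive δ ρ (c + 1))
    (hnr : ∃ u z, u.length = c ∧ ¬ Rigid δ ρ u z) : Branching δ ρ c := by
  refine ⟨hcard, hinv, hrev, hc, htrans, fun u hu => ?_⟩
  -- every word `p z` with `|p| = c` can be moved to one starting with `u`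
  have hmove : ∀ p : List Q, p.length = c → ∀ z, ∃ z', InOrbit δ ρ (p ++ [z]) (u ++ [z']) := by
    intro p hp z
    obtain ⟨s, hs⟩ := htrans p u hp hu
    obtain ⟨z', hz'⟩ := dWord_singleton (δ := δ) (ρ := ρ) (rWord δ ρ p s) z
    exact ⟨z', s, by rw [dWord_append, hs, hz']⟩
  obtain ⟨a, b, hab, horb⟩ : ∃ a b, a ≠ b ∧ InOrbit δ ρ (u ++ [a]) (u ++ [b]) := by
    obtain ⟨p, z, hp, hz⟩ := hnr
    obtain ⟨a, ha⟩ := hmove p hp z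
    have hna : ¬ Rigid δ ρ u a := fun h => hz (h.of_inOrbit hrev (ha.symm hrev))
    simp only [Rigid, not_forall] at hna
    obtain ⟨b, h1, h2⟩ := hna
    exact ⟨a, b, Ne.symm h2, h1⟩
  obtain ⟨f, hfa, hfb⟩ := exists_third hcard a b
  have hnf : ∀ x, x = a ∨ x = b → ¬ InOrbit δ ρ (u ++ [f]) (u ++ [x]) := by
    intro x hx hfx
    apply hnot
    have hall : ∀ z, InOrbit δ ρ (u ++ [a]) (u ++ [z]) := by
      have haf : InOrbit δ ρ (u ++ [a]) (u ++ [f]) := by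
        rcases hx with rfl | rfl
        · exact hfx.symm hrev
        · exact horb.trans (hfx.symm hrev)
      intro z
      rcases three_cases hcard hab hfa hfb z with rfl | rfl | rfl
      · exact InOrbit.refl _
      · exact horb
      · exact haf
    have hto : ∀ w : List Q, w.length = c + 1 → InOrbit δ ρ w (u ++ [a]) := by
      intro w hw
      obtain ⟨p, z, rfl⟩ : ∃ p z, w = p ++ [z] :=
        ⟨_, _, (List.dropLast_append_getLast (l := w) (by rintro rfl; simp at hw)).symm⟩
      obtain ⟨z', h⟩ := hmove p (by simpa using hw) z
      exact h.trans ((hall z').symm hrev)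
    exact fun w w' hw hw' => (hto w hw).trans ((hto w' hw').symm hrev)
  refine ⟨f, fun z => ⟨fun hz => ?_, ?_⟩⟩
  · rcases three_cases hcard hab hfa hfb z with rfl | rfl | rfl
    · exact absurd (hz b horb).symm hab
    · exact absurd (hz a (horb.symm hrev)) hab
    · rfl
  · rintro rfl z' hz'
    rcases three_cases hcard hab hfa hfb z' with rfl | rfl | rfl
    · exact absurd hz' (hnf _ (Or.inl rfl))
    · exact absurd hz' (hnf _ (Or.inr rfl))
    · rfl

namespace Branching

lemma exists_right (B : Branching δ ρ c)
    {u : List Q} (hu : u.length = c) : ∃ z, ¬ Rigid δ ρ u z := by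
  obtain ⟨f, hf⟩ := B.rigid_iff u hu
  obtain ⟨z, hz, -⟩ := exists_third B.card f f
  exact ⟨z, fun h => hz ((hf z).1 h)⟩

lemma rigid_left_unique [Finite Q] (B : Branching δ ρ c)
    {v : List Q} {y y' z : Q} (hv : v.length + 1 = c)
    (h : Rigid δ ρ (y :: v) z) (h' : Rigid δ ρ (y' :: v) z) : y' = y := by
  refine left_unique B.inv B.rev (p := y :: v) (w := v ++ [z]) rfl
    (B.trans _ _ (by simpa) (by simpa)) h ?_
  obtain ⟨s, hs⟩ := B.trans (y :: v) (y' :: v) (by simpa) (by simpa)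
  obtain ⟨z', hz'⟩ := dWord_singleton (δ := δ) (ρ := ρ) (rWord δ ρ (y :: v) s) z
  have h1 : InOrbit δ ρ (y :: v ++ [z]) (y' :: v ++ [z']) := ⟨s, by rw [dWord_append, hs, hz']⟩
  obtain ⟨f, hf⟩ := B.rigid_iff (y' :: v) (by simpa)
  have h2 := (hf z').1 (h.of_inOrbit B.rev h1)
  rw [h2, ← (hf z).1 h'] at h1
  exact h1

/-- Among the three left extensions of `v`, at most one makes a given letter rigid, so two letters
can be made non-rigid simultaneously. -/
lemma exists_left_pair [Finite Q] (B : Branching δ ρ c)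
    {v : List Q} (hv : v.length + 1 = c) (z z' : Q) :
    ∃ y, ¬ Rigid δ ρ (y :: v) z ∧ ¬ Rigid δ ρ (y :: v) z' := by
  have h1 : ∀ z, ∃ y₀, ∀ y, y ≠ y₀ → ¬ Rigid δ ρ (y :: v) z := by
    intro z
    by_cases h : ∃ y₀, Rigid δ ρ (y₀ :: v) z
    · obtain ⟨y₀, h⟩ := h
      exact ⟨y₀, fun y hy h' => hy (B.rigid_left_unique hv h h')⟩
    · exact ⟨z, fun y _ h' => h ⟨y, h'⟩⟩
  obtain ⟨a, ha⟩ := h1 z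
  obtain ⟨b, hb⟩ := h1 z'
  obtain ⟨y, hya, hyb⟩ := exists_third B.card a b
  exact ⟨y, ha y hya, hb y hyb⟩

/-- If the local action at the end of `a u` is not trivial, it has the same orbits as the one at
the end of its suffix `u` of length `c`. -/
lemma inOrbit_of_active [Finite Q] (B : Branching δ ρ c)
    {a u : List Q} (hu : u.length = c) {z x x' : Q}
    (hz : ¬ Rigid δ ρ (a ++ u) z) (hx : ¬ Rigid δ ρ u x) (hx' : ¬ Rigid δ ρ u x') :
    InOrbit δ ρ (a ++ u ++ [x]) (a ++ u ++ [x']) := by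
  simp only [Rigid, not_forall] at hz
  obtain ⟨z', horb, hne⟩ := hz
  obtain ⟨f, hf⟩ := B.rigid_iff u hu
  have hu' : InOrbit δ ρ (u ++ [z]) (u ++ [z']) := by
    rw [List.append_assoc, List.append_assoc] at horb
    exact horb.of_append (by simp)
  have hzf : f ≠ z := fun h => hne ((hf z).2 h.symm z' hu')
  have hzf' : f ≠ z' := fun h => hne ((hf z').2 h.symm z (hu'.symm B.rev)).symm
  have h2 : ∀ y, ¬ Rigid δ ρ u y → InOrbit δ ρ (a ++ u ++ [z]) (a ++ u ++ [y]) := by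
    intro y hy
    rcases three_cases B.card (Ne.symm hne) hzf hzf' y with rfl | rfl | rfl
    · exact InOrbit.refl _
    · exact horb
    · exact absurd ((hf _).2 rfl) hy
  exact ((h2 x hx).symm B.rev).trans (h2 x' hx')

lemma not_rigid_of_active [Finite Q] (B : Branching δ ρ c)
    {a u : List Q} (hu : u.length = c) {z x : Q}
    (hz : ¬ Rigid δ ρ (a ++ u) z) (hx : ¬ Rigid δ ρ u x) : ¬ Rigid δ ρ (a ++ u) x := by
  intro h
  have hz' : ¬ Rigid δ ρ u z := fun h => hz (h.append_left a)
  have := h z (B.inOrbit_of_active hu hz hx hz')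
  exact hz (this ▸ h)

end Branching

/-- Some orbital word of length `n` has a trivial local action at its end. -/
def Dead (δ : X → Q → Q) (ρ : Q → X → X) (c n : ℕ) : Prop :=
  ∃ w, NonRigidWord δ ρ c w ∧ w.length = n ∧ ∀ z, Rigid δ ρ w z

lemma exists_suffix (w : List Q) {n : ℕ} (h : n ≤ w.length) :
    ∃ a u, w = a ++ u ∧ u.length = n :=
  ⟨w.take (w.length - n), w.drop (w.length - n), (List.take_append_drop _ _).symm, by simp; omega⟩

lemma exists_initial (w : List Q) {n : ℕ} (h : n ≤ w.length) :
    ∃ u b, w = u ++ b ∧ u.length = n :=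
  ⟨w.take n, w.drop n, (List.take_append_drop _ _).symm, by simp [h]⟩

namespace Branching

/-- If no orbital word of length in `[c, N)` is dead, the local actions at these words exchange
their two orbital continuations, so the orbital words of a given length `≤ N` form one orbit. -/
lemma single_orbit [Finite Q] (B : Branching δ ρ c)
    {N : ℕ} (hN : ∀ n, c ≤ n → n < N → ¬ Dead δ ρ c n) {n : ℕ} (hcn : c ≤ n)
    (hn : n ≤ N) {w w' : List Q} (hw : NonRigidWord δ ρ c w) (hw' : NonRigidWord δ ρ c w')
    (hl : w.length = n) (hl' : w'.length = n) : InOrbit δ ρ w w' := by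
  induction n, hcn using Nat.le_induction generalizing w w' with
  | base => exact B.trans w w' hl hl'
  | succ n hcn ih =>
    obtain ⟨p, z, rfl⟩ : ∃ p z, w = p ++ [z] :=
      ⟨_, _, (List.dropLast_append_getLast (l := w) (by rintro rfl; simp at hl)).symm⟩
    obtain ⟨p', z', rfl⟩ : ∃ p z, w' = p ++ [z] :=
      ⟨_, _, (List.dropLast_append_getLast (l := w') (by rintro rfl; simp at hl')).symm⟩
    simp only [List.length_append, List.length_singleton, add_left_inj] at hl hl'
    obtain ⟨s, hs⟩ := ih (by omega) hw.left hw'.left hl hl'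
    obtain ⟨z'', hz''⟩ := dWord_singleton (δ := δ) (ρ := ρ) (rWord δ ρ p s) z
    have h1 : InOrbit δ ρ (p ++ [z]) (p' ++ [z'']) := ⟨s, by rw [dWord_append, hs, hz'']⟩
    have h2 := hw.of_inOrbit B.rev h1
    obtain ⟨a, u, rfl, hu⟩ := exists_suffix p' (hcn.trans_eq hl'.symm)
    have h3 := hN n hcn (by omega)
    simp only [Dead, not_exists, not_and, not_forall] at h3
    obtain ⟨x, hx⟩ := h3 (a ++ u) hw'.left hl'
    exact h1.trans (B.inOrbit_of_active hu hx (h2 a u z'' [] hu (by simp))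
      (hw' a u z' [] hu (by simp)))

lemma exists_left [Finite Q] (B : Branching δ ρ c)
    {w : List Q} (hw : NonRigidWord δ ρ c w) (hl : c ≤ w.length) :
    ∃ y, NonRigidWord δ ρ c (y :: w) := by
  have hpos := B.pos
  obtain ⟨v, b, rfl, hv⟩ := exists_initial w (n := c - 1) (by omega)
  cases b with
  | nil => simp at hl; omega
  | cons z b =>
    obtain ⟨y, hy, -⟩ := B.exists_left_pair (v := v) (by omega) z z
    exact ⟨y, hw.cons (by simp; omega) hy⟩

lemma exists_right_extension (B : Branching δ ρ c)
    {w : List Q} (hw : NonRigidWord δ ρ c w) (hl : c ≤ w.length) (m : ℕ) :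
    ∃ j : List Q, j.length = m ∧ NonRigidWord δ ρ c (w ++ j) := by
  induction m with
  | zero => exact ⟨[], rfl, by simpa⟩
  | succ m ih =>
    obtain ⟨j, hj, h⟩ := ih
    obtain ⟨a, u, hau, hu⟩ := exists_suffix (w ++ j) (n := c) (by simp; omega)
    obtain ⟨z, hz⟩ := B.exists_right hu
    refine ⟨j ++ [z], by simp [hj], ?_⟩
    rw [hau] at h
    rw [← List.append_assoc, hau]
    exact h.snoc hu hz

/-- If orbital words never die, a periodic orbital path gives a power sequence along which the
local action never becomes trivial. -/
lemma exists_periodic [Finite Q] (B : Branching δ ρ c) (halive : ∀ n, c ≤ n → ¬ Dead δ ρ c n) :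
    ∃ u : List Q, u ≠ [] ∧ ∃ K, ∀ k, K ≤ k →
      ∃ p x, wpow u k = p ++ [x] ∧ ¬ Rigid δ ρ p x := by
  have hpos := B.pos
  have hfin : Finite {l : List Q // l.length = c} := List.finite_length_eq Q c
  choose g hg using fun l : {l : List Q // l.length = c} => B.exists_right l.2
  let F : {l : List Q // l.length = c} → {l : List Q // l.length = c} :=
    fun l => ⟨l.1.tail ++ [g l], by simp [l.2]; omega⟩
  obtain ⟨q₀⟩ : Nonempty Q := (Nat.card_pos_iff.1 (by rw [B.card]; omega)).1
  obtain ⟨w, k, hk, hper⟩ : ∃ w, ∃ k, 0 < k ∧ F^[k] w = w := by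
    obtain ⟨i, j, hij, heq⟩ := Finite.exists_ne_map_eq_of_infinite
      fun n : ℕ => F^[n] ⟨List.replicate c q₀, by simp⟩
    wlog hlt : i < j generalizing i j
    · exact this j i hij.symm heq.symm (by omega)
    refine ⟨F^[i] ⟨List.replicate c q₀, by simp⟩, j - i, by omega, ?_⟩
    rw [← Function.iterate_add_apply, Nat.sub_add_cancel hlt.le]
    exact heq.symm
  let x : ℕ → Q := fun i => g (F^[i] w)
  have hx : ∀ i, x (k + i) = x i := by
    intro i
    simp only [x]
    rw [add_comm, Function.iterate_add_apply, hper]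
  have hsucc : ∀ n, pref x (n + 1) = pref x n ++ [x n] := by
    intro n; simp [pref, List.range_succ]
  have hlen : ∀ n, (pref x n).length = n := by intro n; simp [pref]
  have hpath : ∀ n, ∃ a, w.1 ++ pref x n = a ++ (F^[n] w).1 ∧
      NonRigidWord δ ρ c (w.1 ++ pref x n) := by
    intro n
    induction n with
    | zero => exact ⟨[], by simp [pref], NonRigidWord.of_length_le (by simp [pref, w.2])⟩
    | succ n ih =>
      obtain ⟨a, h1, h2⟩ := ih
      obtain ⟨y, v, hyv⟩ : ∃ y v, (F^[n] w).1 = y :: v :=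
        List.exists_cons_of_ne_nil fun h => by
          have := (F^[n] w).2
          rw [h] at this; simp at this; omega
      refine ⟨a ++ [y], ?_, ?_⟩
      · rw [hsucc, ← List.append_assoc, h1, Function.iterate_succ_apply']
        simp only [F, x, hyv]
        simp
      · rw [hsucc, ← List.append_assoc, h1]
        rw [h1] at h2
        exact h2.snoc (F^[n] w).2 (hg _)
  have hnr : ∀ n, c ≤ n → ¬ Rigid δ ρ (pref x n) (x n) := by
    intro n hn
    obtain ⟨a, h1, h2⟩ := hpath n
    obtain ⟨a', u, hau, hu⟩ := exists_suffix (pref x n) (n := c) (by rw [hlen]; exact hn)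
    have h3 := halive n hn
    simp only [Dead, not_exists, not_and, not_forall] at h3
    obtain ⟨z, hz⟩ := h3 _ h2.right (hlen n)
    rw [hau] at hz h1 ⊢
    rw [← List.append_assoc] at h1
    have h4 := (List.append_inj' h1 (by rw [hu, (F^[n] w).2])).2
    refine B.not_rigid_of_active hu hz ?_
    rw [h4]
    exact hg _
  have hpow : ∀ m, wpow (pref x k) m = pref x (k * m) := by
    intro m
    induction m with
    | zero => simp [wpow, pref]
    | succ m ih =>
      rw [wpow_succ, ih, Nat.mul_succ, add_comm (k * m) k]
      simp only [pref, List.range_add, List.map_append, List.map_map]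
      congr 1
      exact List.map_congr_left fun i _ => (hx i).symm
  refine ⟨pref x k, fun h => ?_, c + 1, fun m hm => ?_⟩
  · have := hlen k
    rw [h] at this; simp at this; omega
  · obtain ⟨n, hn⟩ : ∃ n, k * m = n + 1 := ⟨k * m - 1, by
      have : 0 < k * m := Nat.mul_pos hk (by omega)
      omega⟩
    have hmn : c ≤ n := by nlinarith
    exact ⟨pref x n, x n, by rw [hpow, hn, hsucc], hnr n hmn⟩

/-- The heart of the argument: if orbital words die at length `N`, the group is finite. A section
of the stabilizer of an orbital word `P` of length `N` follows orbital continuations of `P` without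
moving anything. If `u₁ v` are the last `c` letters of `P` and `z` is rigid after `u₁ v`, one follows
an orbital continuation `j` of `P` and comes back along another orbital word ending in `y v j`,
where `y` is chosen so that `y v z` is orbital too. -/
lemma finite_of_dead [Finite Q] (B : Branching δ ρ c)
    [Finite X] {N : ℕ} (hcN : c ≤ N) (hdead : Dead δ ρ c N)
    (hmin : ∀ n, c ≤ n → n < N → ¬ Dead δ ρ c n) : Finite ↥(autGroup δ ρ) := by
  have hpos := B.pos
  have horb : ∀ w w' : List Q, NonRigidWord δ ρ c w → NonRigidWord δ ρ c w' → w.length = N →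
      w'.length = N → InOrbit δ ρ w w' := fun w w' hw hw' hl hl' =>
    B.single_orbit hmin hcN le_rfl hw hw' hl hl'
  obtain ⟨w₀, hw₀, hl₀, hr₀⟩ := hdead
  have hrig : ∀ P : List Q, NonRigidWord δ ρ c P → P.length = N → ∀ z, Rigid δ ρ P z := by
    intro P hP hl z
    obtain ⟨s, hs⟩ := horb P w₀ hP hw₀ hl hl₀
    obtain ⟨z', hz'⟩ := dWord_singleton (δ := δ) (ρ := ρ) (rWord δ ρ P s) z
    have h1 : InOrbit δ ρ (P ++ [z]) (w₀ ++ [z']) := ⟨s, by rw [dWord_append, hs, hz']⟩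
    exact (hr₀ z').of_inOrbit B.rev (h1.symm B.rev)
  -- Elements of `Sec w` are in `Sec (y w)`, by `left_unique` at the first `N + 1` letters of `y w`.
  have hleft : ∀ w y t, N ≤ w.length → NonRigidWord δ ρ c (y :: w) → t ∈ Sec δ ρ w →
      t ∈ Sec δ ρ (y :: w) := by
    intro w y t hl hw ht
    obtain ⟨w₁, w₂, rfl, hl₁⟩ := exists_initial w hl
    have hw₁ : NonRigidWord δ ρ c (y :: w₁) := hw.left (w := y :: w₁)
    obtain ⟨t₁, ht₁, hfix, rfl⟩ := Sec.exists_of_append ht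
    refine Sec.append (v := y :: w₁) (Sec.cons B.inv (fun y' hy' => ?_) ht₁) hfix
    have hsnoc : y :: w₁ = (y :: w₁).dropLast ++ [(y :: w₁).getLast (by simp)] :=
      (List.dropLast_append_getLast _).symm
    have hp : NonRigidWord δ ρ c (y :: w₁).dropLast := by
      rw [hsnoc] at hw₁; exact hw₁.left
    exact left_unique B.inv B.rev hsnoc
      (horb _ _ hp (hw₁.right (a := [y])) (by simp [hl₁]) hl₁) (hrig _ hp (by simp [hl₁]) _) hy'
  have hleft' : ∀ m w t, N ≤ w.length → NonRigidWord δ ρ c w → t ∈ Sec δ ρ w →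
      ∃ b : List Q, b.length = m ∧ NonRigidWord δ ρ c (b ++ w) ∧ t ∈ Sec δ ρ (b ++ w) := by
    intro m w t hl hw ht
    induction m with
    | zero => exact ⟨[], rfl, hw, ht⟩
    | succ m ih =>
      obtain ⟨b, hb, h1, h2⟩ := ih
      have hlb : N ≤ (b ++ w).length := by simp; omega
      obtain ⟨y, hy⟩ := B.exists_left h1 (hcN.trans hlb)
      exact ⟨y :: b, by simp [hb], hy, hleft _ y t hlb hy h2⟩
  have hright : ∀ j w t, N ≤ w.length → NonRigidWord δ ρ c (w ++ j) → t ∈ Sec δ ρ w →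
      dWord δ ρ t j = j := by
    intro j
    induction j with
    | nil => exact fun w t _ _ _ => List.length_eq_zero_iff.1 (by simp)
    | cons z j ih =>
      intro w t hl hw ht
      obtain ⟨a, P, rfl, hP⟩ := exists_suffix w hl
      have h1 : dWord δ ρ t [z] = [z] :=
        Sec.fix ht ((hrig P hw.left.right hP z).append_left a)
      have h2 := dWord_append (δ := δ) (ρ := ρ) t [z] j
      rw [h1, ih (a ++ P ++ [z]) _ (by simp; omega) (by simpa using hw) (Sec.append ht h1)] at h2
      exact h2
  have hsuffix : ∀ w t, N ≤ w.length → NonRigidWord δ ρ c w → t ∈ Sec δ ρ w →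
      ∃ P ∈ {P | NonRigidWord δ ρ c P ∧ P.length = N}, t ∈ Sec δ ρ P := by
    intro w t hl hw ht
    obtain ⟨a, P, rfl, hP⟩ := exists_suffix w hl
    exact ⟨P, ⟨hw.right, hP⟩, Sec.of_append_left ht⟩
  refine finite_of_closed B.inv B.rev (C := {P | NonRigidWord δ ρ c P ∧ P.length = N})
    ⟨w₀, hw₀, hl₀⟩ ?_
  rintro P ⟨hP, hl⟩ t ht z
  have hfix : dWord δ ρ t [z] = [z] := Sec.fix ht (hrig P hP hl z)
  refine ⟨hfix, ?_⟩
  obtain ⟨p, u, rfl, hu⟩ := exists_suffix P (hcN.trans_eq hl.symm)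
  by_cases hz : Rigid δ ρ u z
  · obtain ⟨u₁, v, rfl⟩ : ∃ u₁ v, u = u₁ :: v :=
      List.exists_cons_of_ne_nil (by rintro rfl; simp at hu; omega)
    -- `j` is longer than `N`, so that `v j` has length at least `N` and can be extended to the left.
    obtain ⟨j, hjl, hj⟩ := B.exists_right_extension hP (hcN.trans_eq hl.symm) (N + 1)
    have htj := Sec.append ht (hright j _ t hl.ge hj ht)
    obtain ⟨j₁, j', rfl⟩ : ∃ j₁ j', j = j₁ :: j' :=
      List.exists_cons_of_ne_nil (by rintro rfl; simp at hjl)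
    have hvc : v.length + 1 = c := by simpa using hu
    obtain ⟨y, hyz, hyj⟩ := B.exists_left_pair hvc z j₁
    have hassoc : p ++ u₁ :: v ++ j₁ :: j' = (p ++ [u₁]) ++ (v ++ j₁ :: j') := by simp
    rw [hassoc] at hj htj
    have hyvj := hj.right.cons (by simpa) hyj
    have htj' := hleft _ y _ (by simp at hjl ⊢; omega) hyvj (Sec.of_append_left htj)
    obtain ⟨b, hb, h1, h2⟩ := hleft' N _ _ (by simp at hjl ⊢; omega) hyvj htj'
    have hassoc' : b ++ y :: (v ++ j₁ :: j') = (b ++ y :: v) ++ j₁ :: j' := by simp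
    rw [hassoc'] at h1 h2
    obtain ⟨t₁, ht₁, -, heq⟩ := Sec.exists_of_append h2
    obtain rfl := (rWord_bijective B.inv _).1 heq
    exact hsuffix _ _ (by simp; omega) (h1.left.snoc (by simpa) hyz) (Sec.append ht₁ hfix)
  · exact hsuffix _ _ (by simp at hl ⊢; omega) (hP.snoc hu hz) (Sec.append ht hfix)

end Branching

end Orbital

/-! ### The case distinction -/

lemma exists_infinite_order_word [Finite Q] [Finite X]
    {δ : X → Q → Q} {ρ : Q → X → X} (hcard : Nat.card Q = 3)
    (hinv : ∀ q : Q, Function.Bijective (ρ q)) (hrev : ∀ i : X, Function.Bijective (δ i))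
    (hconn : LevelTransitive δ ρ 1) (hinf : Infinite ↥(autGroup δ ρ)) :
    ∃ u : List Q, u ≠ [] ∧ ∀ k : ℕ, 0 < k → rWord δ ρ (wpow u k) ≠ id := by
  classical
  have hQ : Nonempty Q := (Nat.card_pos_iff.1 (by rw [hcard]; omega)).1
  by_cases hall : ∀ n, LevelTransitive δ ρ n
  · -- every power of the automaton is connected: any single letter works
    obtain ⟨q⟩ := hQ
    refine ⟨[q], by simp, infinite_order (K := 1) (by simp) fun k hk => ?_⟩
    obtain ⟨m, rfl⟩ : ∃ m, k = m + 1 := ⟨k - 1, by omega⟩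
    refine ⟨wpow [q] m, q, by rw [wpow_add]; simp [wpow], fun h => ?_⟩
    obtain ⟨z, hz, -⟩ := exists_third hcard q q
    exact hz (h z (hall _ _ _ rfl (by simp)))
  push Not at hall
  obtain ⟨c, hc, htrans, hnot⟩ : ∃ c, 0 < c ∧ LevelTransitive δ ρ c ∧
      ¬ LevelTransitive δ ρ (c + 1) := by
    have h0 : LevelTransitive δ ρ 0 := by
      intro u v hu hv
      rw [List.length_eq_zero_iff.1 hu, List.length_eq_zero_iff.1 hv]
      exact InOrbit.refl _
    have hspec := Nat.find_spec hall
    have hlt : 1 < Nat.find hall := by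
      by_contra hle
      have : Nat.find hall = 0 ∨ Nat.find hall = 1 := by omega
      rcases this with h | h <;> rw [h] at hspec <;> contradiction
    refine ⟨Nat.find hall - 1, by omega, ?_, ?_⟩
    · exact not_not.1 (Nat.find_min hall (by omega))
    · rwa [Nat.sub_add_cancel hlt.le]
  by_cases hnr : ∃ u z, u.length = c ∧ ¬ Rigid δ ρ u z
  · have B := Branching.of_not_transitive hcard hinv hrev hc htrans hnot hnr
    by_cases hdead : ∃ n, c ≤ n ∧ Dead δ ρ c n
    · have hspec := Nat.find_spec hdead
      have := B.finite_of_dead hspec.1 hspec.2 fun n hcn hn hd =>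
        Nat.find_min hdead hn ⟨hcn, hd⟩
      exact (not_finite ↥(autGroup δ ρ)).elim
    · push Not at hdead
      obtain ⟨u, hu, K, hK⟩ := B.exists_periodic hdead
      exact ⟨u, hu, infinite_order hu hK⟩
  · -- all labels are `1` beyond level `c`
    push Not at hnr
    have : Finite ↥(autGroup δ ρ) := by
      obtain ⟨q⟩ := hQ
      refine finite_of_closed hinv hrev (C := {P | P.length = c}) ⟨List.replicate c q, by simp⟩ ?_
      intro P hP t ht z
      have hfix := Sec.fix ht (hnr P z hP)
      refine ⟨hfix, ?_⟩
      obtain ⟨a, P', hP', hl⟩ := exists_suffix (P ++ [z]) (n := c) (by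
        have : P.length = c := hP
        simp; omega)
      have h1 := Sec.append ht hfix
      rw [hP'] at h1
      exact ⟨P', hl, Sec.of_append_left h1⟩
    exact (not_finite ↥(autGroup δ ρ)).elim

lemma exists_perm_of_word {δ : X → Q → Q} {ρ : Q → X → X}
    (hinv : ∀ q : Q, Function.Bijective (ρ q)) (u : List Q) :
    ∃ π ∈ autGroup δ ρ, ⇑π = rWord δ ρ u := by
  induction u with
  | nil => exact ⟨1, one_mem _, rfl⟩
  | cons x u ih =>
    obtain ⟨π, hπ, h⟩ := ih
    refine ⟨π * Equiv.ofBijective _ (rExt_bijective hinv x),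
      mul_mem hπ (Subgroup.subset_closure ⟨x, rfl⟩), ?_⟩
    funext s
    simp [h, rWord]

/-- If a connected 3-state invertible-reversible Mealy automaton
generates an infinite group, then this group contains an element of infinite order;
moreover some `ρ_u`, for a nonempty word `u` over `Q`, has infinite order. -/
theorem connected_three_state_infinite_order
    {Q X : Type*} [Finite Q] [Finite X] [Nonempty X]
    (δ : X → Q → Q) (ρ : Q → X → X)
    (hcard : Nat.card Q = 3)
    (hinv : ∀ q : Q, Function.Bijective (ρ q))
    (hrev : ∀ i : X, Function.Bijective (δ i))
    (hconn : LevelTransitive δ ρ 1)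
    (hinf : Infinite ↥(autGroup δ ρ)) :
    (∃ g ∈ autGroup δ ρ, ¬ IsOfFinOrder g) ∧
    (∃ u : List Q, u ≠ [] ∧ ∀ k : ℕ, 0 < k → rWord δ ρ (wpow u k) ≠ id) := by
  obtain ⟨u, hu, h⟩ := exists_infinite_order_word hcard hinv hrev hconn hinf
  refine ⟨?_, u, hu, h⟩
  obtain ⟨π, hπ, hcoe⟩ := exists_perm_of_word (δ := δ) hinv u
  refine ⟨π, hπ, fun hfo => ?_⟩
  obtain ⟨n, hn, h1⟩ := isOfFinOrder_iff_pow_eq_one.1 hfo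
  refine h n hn ?_
  rw [← coe_pow_eq hcoe, h1]
  rfl

end MealyFormal
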